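/- There exist nonconstant polynomials f, g, h ∈ ℂ[X] satisfying f^3 + g^3 + h^3 = 1. -/

import Mathlib

theorem stmt_16 :
    ∃ f g h : Polynomial ℂ, 0 < f.degree ∧ 0 < g.degree ∧ 0 < h.degree ∧
      f ^ 3 + g ^ 3 + h ^ 3 = 1 := by
  refine ⟨Polynomial.C 9 * Polynomial.X ^ 4,
    Polynomial.C (-9) * Polynomial.X ^ 4 + Polynomial.C 3 * Polynomial.X,
    Polynomial.C (-9) * Polynomial.X ^ 3 + Polynomial.C 1, ?_, ?_, ?_, ?_⟩
  · have h : (Polynomial.C (9 : ℂ) * Polynomial.X ^ 4).degree = 4 := by compute_degree!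
    rw [h]; norm_num
  · have h : (Polynomial.C (-9 : ℂ) * Polynomial.X ^ 4
        + Polynomial.C 3 * Polynomial.X).degree = 4 := by compute_degree!
    rw [h]; norm_num
  · have h : (Polynomial.C (-9 : ℂ) * Polynomial.X ^ 3 + Polynomial.C 1).degree = 3 := by
      compute_degree!
    rw [h]; norm_num
  · have h9 : (Polynomial.C (9 : ℂ)) = 9 := rfl
    have h3 : (Polynomial.C (3 : ℂ)) = 3 := rfl
    rw [Polynomial.C_neg, h9, h3, Polynomial.C_1]
    ring
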